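/- Let Ω, Ω̄ ⊆ ℝⁿ be bounded open sets and c : ℝⁿ × ℝⁿ → ℝ a cost function satisfying (A0)–(A2) for Ω, Ω̄, such that Ω is c-convex with respect to Ω̄, and such that c satisfies Loeper's maximum principle. Let u : Ω → ℝ be a c-convex function. Then for any x̄₀ ∈ Ω̄ and λ₀ ∈ ℝ, if the function x ↦ u(x) + c(x, x̄₀) − λ₀ has a local minimum at a point x₀ ∈ Ω, then x̄₀ ∈ ∂_c u(x₀). -/

import Mathlib

open Set

/-- `D_x c(x,y)`: the Fréchet derivative of `c` in its first variable, identified with a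
vector in `ℝⁿ` via the inner product (i.e. the gradient in the first variable). -/
noncomputable def Dx {n : ℕ} (c : EuclideanSpace ℝ (Fin n) → EuclideanSpace ℝ (Fin n) → ℝ)
    (x y : EuclideanSpace ℝ (Fin n)) : EuclideanSpace ℝ (Fin n) :=
  gradient (fun z => c z y) x

/-- `D_x̄ c(x,y)`: the Fréchet derivative of `c` in its second variable, identified with a
vector in `ℝⁿ` via the inner product (i.e. the gradient in the second variable). -/
noncomputable def Dy {n : ℕ} (c : EuclideanSpace ℝ (Fin n) → EuclideanSpace ℝ (Fin n) → ℝ)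
    (x y : EuclideanSpace ℝ (Fin n)) : EuclideanSpace ℝ (Fin n) :=
  gradient (fun z => c x z) y

/-- The `c`-subdifferential of `u` at `x₀` (relative to domains `Ω`, `Ω̄`):
`∂_c u(x₀) = {x̄ ∈ Ω̄ : u(x) ≥ u(x₀) − c(x,x̄) + c(x₀,x̄) for all x ∈ Ω}`. -/
def csub {n : ℕ} (Ω Ωb : Set (EuclideanSpace ℝ (Fin n)))
    (c : EuclideanSpace ℝ (Fin n) → EuclideanSpace ℝ (Fin n) → ℝ)
    (u : EuclideanSpace ℝ (Fin n) → ℝ) (x₀ : EuclideanSpace ℝ (Fin n)) :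
    Set (EuclideanSpace ℝ (Fin n)) :=
  {y ∈ Ωb | ∀ x ∈ Ω, u x₀ - c x y + c x₀ y ≤ u x}

/-!
Loeper's maximum principle is symmetric in the two variables of the cost. In its flipped form it
says that `f = u + c(·,y₀)` is quasiconvex along segments in the coordinate `D_x̄ c(·,y₀)`, for `u`
`c`-convex. Suppose `f` has a local minimum at `x₀` but `f x₁ < f x₀`. Then a point `x` slightly off
`x₀` on the segment towards `x₁` satisfies `f x₀ ≤ f x`, and by quasiconvexity and upper
semicontinuity it is a local maximum of `f`. If `-c(·,y) + λ` supports `u` at `x`, then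
`c(·,y₀) - c(·,y)` also has a local maximum at `x`, so the twist condition gives `y = y₀`. Thus `x`
is a global minimum of `f`, contradicting `f x₁ < f x₀ ≤ f x`.
-/

section CConvexity

variable {X Y : Type*} {Ω : Set X} {Ωb : Set Y} {c : X → Y → ℝ} {u : X → ℝ}

/-- `u` is `c`-convex on `Ω` relative to `Ω̄`. The support `-c(·,y) + λ` of `u` at `x` necessarily
has `λ = u x + c x y`, so that `y` supports `u` at `x` iff `x` minimizes `u + c(·,y)` over `Ω`. -/
def IsCConvexOn (Ω : Set X) (Ωb : Set Y) (c : X → Y → ℝ) (u : X → ℝ) : Prop :=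
  ∀ x ∈ Ω, ∃ y ∈ Ωb, IsMinOn (fun z => u z + c z y) Ω x

theorem isCConvexOn_iff_exists_support :
    IsCConvexOn Ω Ωb c u ↔ ∀ x₀ ∈ Ω, ∃ y₀ ∈ Ωb, ∃ l : ℝ,
      u x₀ = -c x₀ y₀ + l ∧ ∀ x ∈ Ω, -c x y₀ + l ≤ u x := by
  refine forall₂_congr fun x₀ _ => exists_congr fun y₀ => and_congr_right fun _ => ?_
  rw [isMinOn_iff]
  refine ⟨fun hmin => ⟨u x₀ + c x₀ y₀, by ring, fun x hx => ?_⟩, ?_⟩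
  · linarith [hmin x hx]
  · rintro ⟨l, heq, hle⟩ x hx
    linarith [hle x hx]

theorem IsCConvexOn.upperSemicontinuousOn [PseudoMetricSpace X] [PseudoMetricSpace Y]
    (hu : IsCConvexOn Ω Ωb c u)
    (hc : UniformContinuousOn (Function.uncurry c) (Ω ×ˢ Ωb)) : UpperSemicontinuousOn u Ω := by
  intro x₁ hx₁ b hb
  obtain ⟨δ, hδ, hcδ⟩ := Metric.uniformContinuousOn_iff.1 hc (b - u x₁) (sub_pos.2 hb)
  filter_upwards [inter_mem_nhdsWithin Ω (Metric.ball_mem_nhds x₁ hδ)] with x ⟨hx, hxδ⟩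
  obtain ⟨y, hy, hmin⟩ := hu x hx
  have hdist : |c x y - c x₁ y| < b - u x₁ :=
    hcδ (x, y) ⟨hx, hy⟩ (x₁, y) ⟨hx₁, hy⟩ (by simpa [Prod.dist_eq] using hxδ)
  have hsupp : u x + c x y ≤ u x₁ + c x₁ y := hmin hx₁
  linarith [(abs_lt.1 hdist).1]

end CConvexity

section Quasiconvex

open Filter Topology

/-- A point slightly off `x₀` on the `φ`-segment towards `x₁` is a local maximum: every point near
it lies on a `φ`-segment from `x₀` to a point near `x₁`. -/
theorem exists_isLocalMax_of_le_max_on_segment {X E β : Type*} [TopologicalSpace X]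
    [AddCommGroup E] [Module ℝ E] [TopologicalSpace E] [IsTopologicalAddGroup E]
    [ContinuousSMul ℝ E] [LinearOrder β] {Ω : Set X} {φ : X → E} {f : X → β} {x₀ x₁ : X}
    (hΩ : IsOpen Ω) (hφ : ∀ x ∈ Ω, map φ (𝓝 x) = 𝓝 (φ x))
    (hf : ∀ x ∈ Ω, ∀ x' ∈ Ω, ∀ z ∈ Ω, φ z ∈ segment ℝ (φ x) (φ x') → f z ≤ max (f x) (f x'))
    (hx₀ : x₀ ∈ Ω) (hx₁ : x₁ ∈ Ω) (hmin : IsLocalMinOn f Ω x₀)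
    (husc : UpperSemicontinuousWithinAt f Ω x₁) (hlt : f x₁ < f x₀) :
    ∃ x ∈ Ω, f x₀ ≤ f x ∧ IsLocalMax f x := by
  have himage : ∀ {x : X} {p : X → Prop}, x ∈ Ω → (∀ᶠ z in 𝓝[Ω] x, p z) →
      φ '' {z | z ∈ Ω ∧ p z} ∈ 𝓝 (φ x) := fun hx hp => by
    rw [← hφ _ hx]
    exact image_mem_map ((hΩ.eventually_mem hx).and (hΩ.nhdsWithin_eq hx ▸ hp))
  have hnear₀ := himage hx₀ hmin
  have hnear₁ := himage hx₁ (husc _ hlt)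
  obtain ⟨x, ⟨hx, hge⟩, t, ht, hxt⟩ : ∃ x, (x ∈ Ω ∧ f x₀ ≤ f x) ∧
      ∃ t ∈ Ioo (0 : ℝ) 1, φ x = AffineMap.lineMap (φ x₀) (φ x₁) t := by
    have hline : Tendsto (AffineMap.lineMap (φ x₀) (φ x₁)) (𝓝[>] (0 : ℝ)) (𝓝 (φ x₀)) :=
      tendsto_nhdsWithin_of_tendsto_nhds <|
        AffineMap.lineMap_continuous.tendsto' _ _ (AffineMap.lineMap_apply_zero _ _)
    obtain ⟨t, ⟨x, hx, hxt⟩, ht⟩ :=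
      ((hline.eventually_mem hnear₀).and (Ioo_mem_nhdsGT (zero_lt_one' ℝ))).exists
    exact ⟨x, hx, t, ht, hxt⟩
  refine ⟨x, hx, hge, ?_⟩
  have hend : Tendsto (fun z => AffineMap.lineMap (φ x₀) (φ z) t⁻¹) (𝓝 x) (𝓝 (φ x₁)) := by
    have hcont : Continuous fun p => AffineMap.lineMap (φ x₀) p t⁻¹ := by
      simp only [AffineMap.lineMap_apply_module]
      fun_prop
    refine (hcont.tendsto' _ _ ?_).comp (hφ x hx).le
    rw [hxt, AffineMap.lineMap_lineMap_right, inv_mul_cancel₀ ht.1.ne', AffineMap.lineMap_apply_one]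
  filter_upwards [hend hnear₁, hΩ.mem_nhds hx] with z ⟨x', ⟨hx', hlt'⟩, hzx'⟩ hz
  have hseg : φ z ∈ segment ℝ (φ x₀) (φ x') := by
    rw [segment_eq_image_lineMap]
    refine ⟨t, Ioo_subset_Icc_self ht, ?_⟩
    rw [hzx', AffineMap.lineMap_lineMap_right, mul_inv_cancel₀ ht.1.ne',
      AffineMap.lineMap_apply_one]
  exact (hf x₀ hx₀ x' hx' z hz hseg).trans ((max_le le_rfl hlt'.le).trans hge)

end Quasiconvex

section CostDerivatives

open Filter Topology

variable {X Y : Type*} [NormedAddCommGroup X] [NormedSpace ℝ X]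

/-- The covector `D_x c(x,y)`. The derivative in the other variable, `D_x̄ c(x,y)`, is
`costDeriv (flip c) y x`. -/
noncomputable def costDeriv (c : X → Y → ℝ) (x : X) (y : Y) : StrongDual ℝ X :=
  fderiv ℝ (fun z => c z y) x

/-- One half of the twist condition (A1); the other half is `TwistOn Ωb Ω (flip c)`. -/
def TwistOn (Ω : Set X) (Ωb : Set Y) (c : X → Y → ℝ) : Prop :=
  ∀ x ∈ Ω, InjOn (costDeriv c x) Ωb

/-- Loeper's maximum principle: `y ↦ c(x₀,y) - c(x,y)` is quasiconvex along `c`-segments with base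
point `x₀`, that is, along segments in the coordinate `D_x c(x₀,·)`. -/
def LoeperMaximumPrinciple (Ω : Set X) (Ωb : Set Y) (c : X → Y → ℝ) : Prop :=
  ∀ x₀ ∈ Ω, ∀ x ∈ Ω, ∀ y₀ ∈ Ωb, ∀ y₁ ∈ Ωb, ∀ y ∈ Ωb,
    costDeriv c x₀ y ∈ segment ℝ (costDeriv c x₀ y₀) (costDeriv c x₀ y₁) →
    c x₀ y - c x y ≤ max (c x₀ y₀ - c x y₀) (c x₀ y₁ - c x y₁)

section

variable {Ω : Set X} {Ωb : Set Y} {c : X → Y → ℝ} {u : X → ℝ}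

theorem TwistOn.isMinOn_of_isLocalMax (htw : TwistOn Ω Ωb c) (hu : IsCConvexOn Ω Ωb c u)
    {x : X} {y₀ : Y} (hc : ∀ y ∈ Ωb, DifferentiableAt ℝ (fun z => c z y) x)
    (hΩ : Ω ∈ 𝓝 x) (hy₀ : y₀ ∈ Ωb) (hmax : IsLocalMax (fun z => u z + c z y₀) x) :
    IsMinOn (fun z => u z + c z y₀) Ω x := by
  have hx : x ∈ Ω := mem_of_mem_nhds hΩ
  obtain ⟨y, hy, hmin⟩ := hu x hx
  have hdiff : IsLocalMax (fun z => c z y₀ - c z y) x := by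
    simpa using hmax.sub (hmin.isLocalMin hΩ)
  have hderiv : costDeriv c x y₀ - costDeriv c x y = 0 := by
    rw [costDeriv, costDeriv, ← fderiv_fun_sub (hc y₀ hy₀) (hc y hy), hdiff.fderiv_eq_zero]
  rwa [htw x hx hy₀ hy (sub_eq_zero.1 hderiv)]

end

variable [NormedAddCommGroup Y] [NormedSpace ℝ Y] {c : X → Y → ℝ} {x : X} {y : Y}

/-- The mixed second derivative `D_x̄ D_x c(x,y)`. -/
noncomputable def mixedDeriv (c : X → Y → ℝ) (x : X) (y : Y) : Y →L[ℝ] StrongDual ℝ X :=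
  fderiv ℝ (costDeriv c x) y

theorem contDiffAt_uncurry_flip {k : WithTop ℕ∞}
    (hc : ContDiffAt ℝ k (Function.uncurry c) (x, y)) :
    ContDiffAt ℝ k (Function.uncurry (flip c)) (y, x) :=
  hc.comp (y, x) (contDiffAt_snd.prodMk contDiffAt_fst)

theorem contDiffAt_costDeriv {k m : WithTop ℕ∞}
    (hc : ContDiffAt ℝ k (Function.uncurry c) (x, y)) (hm : m + 1 ≤ k) :
    ContDiffAt ℝ m (costDeriv c x) y :=
  (contDiffAt_uncurry_flip hc).fderiv contDiffAt_const hm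

theorem hasStrictFDerivAt_costDeriv (hc : ContDiffAt ℝ 2 (Function.uncurry c) (x, y)) :
    HasStrictFDerivAt (costDeriv c x) (mixedDeriv c x y) y :=
  (contDiffAt_costDeriv (m := 1) hc (by norm_num)).hasStrictFDerivAt one_ne_zero

theorem hasFDerivAt_costDeriv (hc : DifferentiableAt ℝ (Function.uncurry c) (x, y)) :
    HasFDerivAt (fun z => c z y) (costDeriv c x y) x :=
  (hc.comp (f := fun z => (z, y)) x (by fun_prop)).hasFDerivAt

theorem costDeriv_apply (hc : DifferentiableAt ℝ (Function.uncurry c) (x, y)) (ξ : X) :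
    costDeriv c x y ξ = fderiv ℝ (Function.uncurry c) (x, y) (ξ, 0) :=
  DFunLike.congr_fun ((hasFDerivAt_costDeriv hc).unique
    (hc.hasFDerivAt.comp (f := fun z => (z, y)) x (hasFDerivAt_prodMk_left x y))) ξ

theorem mixedDeriv_apply (hc : ContDiffAt ℝ 2 (Function.uncurry c) (x, y)) (η : Y) (ξ : X) :
    mixedDeriv c x y η ξ = fderiv ℝ (fderiv ℝ (Function.uncurry c)) (x, y) (0, η) (ξ, 0) := by
  have hD : HasFDerivAt (fderiv ℝ (Function.uncurry c)) _ (x, y) :=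
    ((hc.fderiv_right (m := 1) (by norm_num)).differentiableAt one_ne_zero).hasFDerivAt
  have hleft := (hasStrictFDerivAt_costDeriv hc).hasFDerivAt.clm_apply (hasFDerivAt_const ξ y)
  have hright := (hD.comp y (hasFDerivAt_prodMk_right x y)).clm_apply (hasFDerivAt_const (ξ, 0) y)
  have hpair : Tendsto (fun y' => (x, y')) (𝓝 y) (𝓝 (x, y)) := Continuous.tendsto (by fun_prop) y
  have heq : (fun y' => costDeriv c x y' ξ) =ᶠ[𝓝 y]
      fun y' => fderiv ℝ (Function.uncurry c) (x, y') (ξ, 0) := by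
    filter_upwards [hpair.eventually (hc.eventually (by simp))] with y' hy'
    exact costDeriv_apply (hy'.differentiableAt two_ne_zero) ξ
  simpa using DFunLike.congr_fun (hleft.unique (hright.congr_of_eventuallyEq heq)) η

theorem mixedDeriv_flip_apply (hc : ContDiffAt ℝ 2 (Function.uncurry c) (x, y)) (ξ : X) (η : Y) :
    mixedDeriv (flip c) y x ξ η = mixedDeriv c x y η ξ := by
  have hswap : iteratedFDeriv ℝ 2 (Function.uncurry (flip c)) (y, x) ![(0, ξ), (η, 0)] =
      iteratedFDeriv ℝ 2 (Function.uncurry c) (x, y) ![(ξ, 0), (0, η)] := by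
    have hcomp := (ContinuousLinearEquiv.prodComm ℝ Y X).iteratedFDerivWithin_comp_right
      (Function.uncurry c) uniqueDiffOn_univ (x := (y, x)) (mem_univ _) 2
    simp only [preimage_univ, iteratedFDerivWithin_univ] at hcomp
    refine (DFunLike.congr_fun hcomp _).trans ?_
    rw [ContinuousMultilinearMap.compContinuousLinearMap_apply]
    congr 1
    ext1 i
    fin_cases i <;> rfl
  rw [mixedDeriv_apply hc, mixedDeriv_apply (contDiffAt_uncurry_flip hc),
    hc.isSymmSndFDerivAt (by simp)]
  simpa [iteratedFDeriv_two_apply] using hswap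

theorem injective_mixedDeriv_flip (hc : ContDiffAt ℝ 2 (Function.uncurry c) (x, y))
    (hsurj : Function.Surjective (mixedDeriv c x y)) :
    Function.Injective (mixedDeriv (flip c) y x) := by
  refine (injective_iff_map_eq_zero _).2 fun ξ hξ => ?_
  refine (SeparatingDual.eq_zero_iff_forall_dual_eq_zero (R := ℝ) ξ).2 fun ℓ => ?_
  obtain ⟨η, rfl⟩ := hsurj ℓ
  rw [← mixedDeriv_flip_apply hc, hξ, zero_apply]

theorem surjective_mixedDeriv_flip [FiniteDimensional ℝ X] [FiniteDimensional ℝ Y]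
    (hdim : Module.finrank ℝ X = Module.finrank ℝ Y)
    (hc : ContDiffAt ℝ 2 (Function.uncurry c) (x, y))
    (hsurj : Function.Surjective (mixedDeriv c x y)) :
    Function.Surjective (mixedDeriv (flip c) y x) := by
  have hdual : Module.finrank ℝ X = Module.finrank ℝ (StrongDual ℝ Y) := by
    rw [hdim, ← Subspace.dual_finrank_eq, LinearMap.toContinuousLinearMap.finrank_eq]
  exact (LinearMap.injective_iff_surjective_of_finrank_eq_finrank hdual).1
    (injective_mixedDeriv_flip hc hsurj)

theorem map_nhds_costDeriv [CompleteSpace Y] (hc : ContDiffAt ℝ 2 (Function.uncurry c) (x, y))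
    (hsurj : Function.Surjective (mixedDeriv c x y)) :
    map (costDeriv c x) (𝓝 y) = 𝓝 (costDeriv c x y) :=
  (hasStrictFDerivAt_costDeriv hc).map_nhds_eq_of_surj (LinearMap.range_eq_top.2 hsurj)

end CostDerivatives

section MaximumPrinciple

open Filter Topology

variable {X Y : Type*} [NormedAddCommGroup X] [NormedSpace ℝ X] [NormedAddCommGroup Y]
  [NormedSpace ℝ Y] {Ω : Set X} {Ωb : Set Y} {c : X → Y → ℝ}

theorem eq_zero_of_eventually_apply_costDeriv_sub_eq_zero
    {x : X} {y : Y} (hc : ContDiffAt ℝ 2 (Function.uncurry c) (x, y))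
    (hsurj : Function.Surjective (mixedDeriv c x y)) {L : StrongDual ℝ X →L[ℝ] ℝ}
    {p : StrongDual ℝ X} (hL : ∀ᶠ y' in 𝓝 y, L (costDeriv c x y' - p) = 0) : L = 0 := by
  have hderiv : HasFDerivAt (fun y' => L (costDeriv c x y' - p)) (L ∘L mixedDeriv c x y) y :=
    L.hasFDerivAt.comp y ((hasStrictFDerivAt_costDeriv hc).hasFDerivAt.sub_const p)
  have hcomp : L ∘L mixedDeriv c x y = 0 :=
    hderiv.unique ((hasFDerivAt_const (0 : ℝ) y).congr_of_eventuallyEq hL)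
  ext q
  obtain ⟨η, rfl⟩ := hsurj q
  exact DFunLike.congr_fun hcomp η

variable [CompleteSpace Y]

theorem exists_continuousLinearEquiv_eq_mixedDeriv {x : X} {y : Y}
    (hc : ContDiffAt ℝ 2 (Function.uncurry c) (x, y))
    (hsurj : Function.Surjective (mixedDeriv c x y))
    (hsurj_flip : Function.Surjective (mixedDeriv (flip c) y x)) :
    ∃ A : Y ≃L[ℝ] StrongDual ℝ X, (A : Y →L[ℝ] StrongDual ℝ X) = mixedDeriv c x y :=
  ⟨.ofBijective (mixedDeriv c x y)
    (LinearMap.ker_eq_bot.2 (injective_mixedDeriv_flip (contDiffAt_uncurry_flip hc) hsurj_flip))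
    (LinearMap.range_eq_top.2 hsurj), rfl⟩

/-- The first-order form of the maximum principle at the endpoint `y₀` of the `c`-segment from `y₀`
to `y₁`, written in the coordinate `D_x c(x,·)`. -/
theorem LoeperMaximumPrinciple.costDeriv_sub_symm_apply_nonpos
    (hmax : LoeperMaximumPrinciple Ω Ωb c) (hΩb : IsOpen Ωb)
    (hc : ∀ x ∈ Ω, ∀ y ∈ Ωb, ContDiffAt ℝ 2 (Function.uncurry c) (x, y))
    {x x' : X} {y₀ y₁ : Y} (hx : x ∈ Ω) (hx' : x' ∈ Ω) (hy₀ : y₀ ∈ Ωb) (hy₁ : y₁ ∈ Ωb)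
    (hle : c x y₁ - c x' y₁ ≤ c x y₀ - c x' y₀)
    {A : Y ≃L[ℝ] StrongDual ℝ X} (hA : (A : Y →L[ℝ] StrongDual ℝ X) = mixedDeriv c x y₀) :
    (costDeriv (flip c) y₀ x - costDeriv (flip c) y₀ x')
      (A.symm (costDeriv c x y₁ - costDeriv c x y₀)) ≤ 0 := by
  have hstrict : HasStrictFDerivAt (costDeriv c x) (A : Y →L[ℝ] StrongDual ℝ X) y₀ :=
    hA ▸ hasStrictFDerivAt_costDeriv (hc x hx y₀ hy₀)
  let ψ := hstrict.localInverse
  let p₀ := costDeriv c x y₀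
  have hψ₀ : ψ p₀ = y₀ := hstrict.localInverse_apply_image
  have hψ : HasFDerivAt ψ (A.symm : StrongDual ℝ X →L[ℝ] Y) p₀ :=
    hstrict.to_localInverse.hasFDerivAt
  have hcost : ∀ z ∈ Ω, HasFDerivAt (c z) (costDeriv (flip c) y₀ z) (ψ p₀) := fun z hz =>
    hψ₀.symm ▸ hasFDerivAt_costDeriv (c := flip c)
      ((contDiffAt_uncurry_flip (hc z hz y₀ hy₀)).differentiableAt two_ne_zero)
  have hderiv : HasFDerivAt (fun p => c x (ψ p) - c x' (ψ p)) _ p₀ :=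
    ((hcost x hx).sub (hcost x' hx')).comp p₀ hψ
  have hlocal : IsLocalMaxOn (fun p => c x (ψ p) - c x' (ψ p))
      (segment ℝ p₀ (costDeriv c x y₁)) p₀ := by
    have hmem : ∀ᶠ p in 𝓝 p₀, ψ p ∈ Ωb :=
      hψ.continuousAt.eventually_mem (hψ₀.symm ▸ hΩb.mem_nhds hy₀)
    filter_upwards [nhdsWithin_le_nhds hmem, nhdsWithin_le_nhds hstrict.eventually_right_inverse,
      self_mem_nhdsWithin] with p hpΩb hpinv hpseg
    have h := hmax x hx x' hx' y₀ hy₀ y₁ hy₁ (ψ p) hpΩb (hpinv.symm ▸ hpseg)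
    rwa [max_eq_left hle, ← hψ₀] at h
  exact hlocal.hasFDerivWithinAt_nonpos hderiv.hasFDerivWithinAt
    (sub_mem_posTangentConeAt_of_segment_subset subset_rfl)

theorem LoeperMaximumPrinciple.eventually_costDeriv_sub_symm_apply_nonpos
    (hmax : LoeperMaximumPrinciple Ω Ωb c) (hΩb : IsOpen Ωb)
    (hc : ∀ x ∈ Ω, ∀ y ∈ Ωb, ContDiffAt ℝ 2 (Function.uncurry c) (x, y))
    {x x' : X} {y₀ y : Y} (hx : x ∈ Ω) (hx' : x' ∈ Ω) (hy₀ : y₀ ∈ Ωb) (hy : y ∈ Ωb)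
    (hlt : c x y - c x' y < c x y₀ - c x' y₀)
    {A : Y ≃L[ℝ] StrongDual ℝ X} (hA : (A : Y →L[ℝ] StrongDual ℝ X) = mixedDeriv c x y₀) :
    ∀ᶠ y' in 𝓝 y, (costDeriv (flip c) y₀ x - costDeriv (flip c) y₀ x')
      (A.symm (costDeriv c x y' - costDeriv c x y₀)) ≤ 0 := by
  have hcont : ∀ z ∈ Ω, ContinuousAt (c z) y := fun z hz =>
    (hasFDerivAt_costDeriv (c := flip c) ((contDiffAt_uncurry_flip
      (hc z hz y hy)).differentiableAt two_ne_zero)).continuousAt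
  have hlt_near : ∀ᶠ y' in 𝓝 y, c x y' - c x' y' < c x y₀ - c x' y₀ :=
    ((hcont x hx).sub (hcont x' hx')).eventually_lt_const hlt
  filter_upwards [hΩb.mem_nhds hy, hlt_near] with y' hy' hlt'
  exact hmax.costDeriv_sub_symm_apply_nonpos hΩb hc hx hx' hy₀ hy' hlt'.le hA

/-- Let `x`, between `x₀` and `x₁`, violate the flipped principle, and let `A = D_x̄ D_x c(x,y₀)`.
The principle at `x` says that `ℓᵢ = D_x̄ c(x,y₀) - D_x̄ c(xᵢ,y₀)`, `i = 0, 1`, are both nonpositive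
at `A⁻¹(D_x c(x,y') - D_x c(x,y₀))` for all `y'` near `y`. A convex combination of `ℓ₀` and `ℓ₁` is
zero, so `ℓ₁` vanishes at these points, which fill an open set; hence `ℓ₁ = 0`, against the
twist. -/
theorem LoeperMaximumPrinciple.symm (hmax : LoeperMaximumPrinciple Ω Ωb c) (hΩb : IsOpen Ωb)
    (hc : ∀ x ∈ Ω, ∀ y ∈ Ωb, ContDiffAt ℝ 2 (Function.uncurry c) (x, y))
    (htw : TwistOn Ωb Ω (flip c))
    (hsurj : ∀ x ∈ Ω, ∀ y ∈ Ωb, Function.Surjective (mixedDeriv c x y))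
    (hsurj_flip : ∀ x ∈ Ω, ∀ y ∈ Ωb, Function.Surjective (mixedDeriv (flip c) y x)) :
    LoeperMaximumPrinciple Ωb Ω (flip c) := by
  intro y₀ hy₀ y hy x₀ hx₀ x₁ hx₁ x hx ⟨a, b, ha, hb, hab, hx01⟩
  change c x y₀ - c x y ≤ max (c x₀ y₀ - c x₀ y) (c x₁ y₀ - c x₁ y)
  by_contra! hlt
  obtain ⟨hlt₀, hlt₁⟩ := max_lt_iff.1 hlt
  obtain ⟨A, hA⟩ := exists_continuousLinearEquiv_eq_mixedDeriv (hc x hx y₀ hy₀)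
    (hsurj x hx y₀ hy₀) (hsurj_flip x hx y₀ hy₀)
  let ℓ (z : X) : StrongDual ℝ Y := costDeriv (flip c) y₀ x - costDeriv (flip c) y₀ z
  have hℓ_ne : ∀ z ∈ Ω, c z y₀ - c z y < c x y₀ - c x y → ℓ z ≠ 0 := by
    intro z hz hzy hℓz
    exact hzy.ne (by rw [htw y₀ hy₀ hx hz (sub_eq_zero.1 hℓz)])
  have hℓ_comb : a • ℓ x₀ + b • ℓ x₁ = 0 := by
    obtain rfl : b = 1 - a := by linarith
    simp only [ℓ, ← hx01]
    module
  have hnonpos : ∀ z ∈ Ω, c z y₀ - c z y < c x y₀ - c x y →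
      ∀ᶠ y' in 𝓝 y, ℓ z (A.symm (costDeriv c x y' - costDeriv c x y₀)) ≤ 0 := fun z hz hzy =>
    hmax.eventually_costDeriv_sub_symm_apply_nonpos hΩb hc hx hz hy₀ hy (by linarith) hA
  have hb_pos : 0 < b := hb.lt_of_ne' fun hb0 => hℓ_ne x₀ hx₀ hlt₀ <| by
    simpa [hb0, (by linarith : a = 1)] using hℓ_comb
  have hzero : ∀ᶠ y' in 𝓝 y, (ℓ x₁ ∘L (A.symm : StrongDual ℝ X →L[ℝ] Y))
      (costDeriv c x y' - costDeriv c x y₀) = 0 := by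
    filter_upwards [hnonpos x₀ hx₀ hlt₀, hnonpos x₁ hx₁ hlt₁] with y' h₀ h₁
    have hcomb := DFunLike.congr_fun hℓ_comb (A.symm (costDeriv c x y' - costDeriv c x y₀))
    simp only [add_apply, smul_apply, smul_eq_mul, zero_apply] at hcomb
    have hℓ₀ := mul_nonpos_of_nonneg_of_nonpos ha h₀
    exact h₁.antisymm ((mul_nonneg_iff_of_pos_left hb_pos).1 (by linarith))
  have hℓA :=
    eq_zero_of_eventually_apply_costDeriv_sub_eq_zero (hc x hx y hy) (hsurj x hx y hy) hzero
  refine hℓ_ne x₁ hx₁ hlt₁ (ContinuousLinearMap.ext fun η => ?_)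
  simpa using DFunLike.congr_fun hℓA (A η)

end MaximumPrinciple

section LocalToGlobal

variable {X Y : Type*} [NormedAddCommGroup Y] [NormedSpace ℝ Y]
  {Ω : Set X} {Ωb : Set Y} {c : X → Y → ℝ} {u : X → ℝ}

theorem IsCConvexOn.le_max_of_mem_segment (hu : IsCConvexOn Ω Ωb c u)
    (hmax : LoeperMaximumPrinciple Ωb Ω (flip c)) {y₀ : Y} (hy₀ : y₀ ∈ Ωb)
    {x₀ x₁ x : X} (hx₀ : x₀ ∈ Ω) (hx₁ : x₁ ∈ Ω) (hx : x ∈ Ω)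
    (hseg : costDeriv (flip c) y₀ x ∈
      segment ℝ (costDeriv (flip c) y₀ x₀) (costDeriv (flip c) y₀ x₁)) :
    u x + c x y₀ ≤ max (u x₀ + c x₀ y₀) (u x₁ + c x₁ y₀) := by
  obtain ⟨y, hy, hmin⟩ := hu x hx
  have hmin₀ : u x + c x y ≤ u x₀ + c x₀ y := hmin hx₀
  have hmin₁ : u x + c x y ≤ u x₁ + c x₁ y := hmin hx₁
  have hle : c x y₀ - c x y ≤ max (c x₀ y₀ - c x₀ y) (c x₁ y₀ - c x₁ y) :=
    hmax y₀ hy₀ y hy x₀ hx₀ x₁ hx₁ x hx hseg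
  rcases le_max_iff.1 hle with h | h
  · exact le_max_of_le_left (by linarith)
  · exact le_max_of_le_right (by linarith)

theorem local_min_to_global_csupport_general
    [NormedAddCommGroup X] [NormedSpace ℝ X] [CompleteSpace X] [CompleteSpace Y]
    (hΩ : IsOpen Ω) (hΩb : IsOpen Ωb)
    (hc : ∀ x ∈ Ω, ∀ y ∈ Ωb, ContDiffAt ℝ 2 (Function.uncurry c) (x, y))
    (htw : TwistOn Ω Ωb c) (htw_flip : TwistOn Ωb Ω (flip c))
    (hsurj : ∀ x ∈ Ω, ∀ y ∈ Ωb, Function.Surjective (mixedDeriv c x y))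
    (hsurj_flip : ∀ x ∈ Ω, ∀ y ∈ Ωb, Function.Surjective (mixedDeriv (flip c) y x))
    (hmax : LoeperMaximumPrinciple Ω Ωb c)
    (hu : IsCConvexOn Ω Ωb c u) (husc : UpperSemicontinuousOn u Ω)
    {y₀ : Y} (hy₀ : y₀ ∈ Ωb) {x₀ : X} (hx₀ : x₀ ∈ Ω)
    (hmin : IsLocalMinOn (fun x => u x + c x y₀) Ω x₀) :
    IsMinOn (fun x => u x + c x y₀) Ω x₀ := by
  have hdiff : ∀ x ∈ Ω, ∀ y ∈ Ωb, DifferentiableAt ℝ (fun z => c z y) x := fun x hx y hy =>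
    (hasFDerivAt_costDeriv ((hc x hx y hy).differentiableAt two_ne_zero)).differentiableAt
  refine isMinOn_iff.2 fun x₁ hx₁ => ?_
  by_contra! hlt
  obtain ⟨x, hx, hge, hlocmax⟩ := exists_isLocalMax_of_le_max_on_segment hΩ
    (fun x hx => map_nhds_costDeriv (contDiffAt_uncurry_flip (hc x hx y₀ hy₀))
      (hsurj_flip x hx y₀ hy₀))
    (fun _ hx _ hx' _ hz => hu.le_max_of_mem_segment
      (hmax.symm hΩb hc htw_flip hsurj hsurj_flip) hy₀ hx hx' hz)
    hx₀ hx₁ hmin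
    (UpperSemicontinuousWithinAt.add (husc x₁ hx₁)
      (hdiff x₁ hx₁ y₀ hy₀).continuousAt.continuousWithinAt.upperSemicontinuousWithinAt) hlt
  have hglobal : u x + c x y₀ ≤ u x₁ + c x₁ y₀ :=
    htw.isMinOn_of_isLocalMax hu (hdiff x hx) (hΩ.mem_nhds hx) hy₀ hlocmax hx₁
  exact (hlt.trans_le hge).not_ge hglobal

end LocalToGlobal

section EuclideanSpace

variable {n : ℕ} {Ω Ωb : Set (EuclideanSpace ℝ (Fin n))}
  {c : EuclideanSpace ℝ (Fin n) → EuclideanSpace ℝ (Fin n) → ℝ}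
  {x y : EuclideanSpace ℝ (Fin n)}

theorem mem_csub_iff_isMinOn {u : EuclideanSpace ℝ (Fin n) → ℝ} :
    y ∈ csub Ω Ωb c u x ↔ y ∈ Ωb ∧ IsMinOn (fun z => u z + c z y) Ω x := by
  simp only [csub, mem_ofPred_eq, isMinOn_iff, sub_add_eq_add_sub, sub_le_iff_le_add]

theorem Dx_eq_toDual_symm (c : EuclideanSpace ℝ (Fin n) → EuclideanSpace ℝ (Fin n) → ℝ)
    (x y : EuclideanSpace ℝ (Fin n)) :
    Dx c x y = (InnerProductSpace.toDual ℝ _).symm (costDeriv c x y) :=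
  rfl

theorem twistOn_of_injOn_neg_Dx (h : ∀ x ∈ Ω, InjOn (fun y => -Dx c x y) Ωb) : TwistOn Ω Ωb c :=
  fun x hx _ hy _ hy' heq => h x hx hy hy' (by simp only [Dx_eq_toDual_symm, heq])

theorem surjective_mixedDeriv_of_fderiv_Dx
    (h : Function.Surjective (fderiv ℝ (fun y' => Dx c x y') y)) :
    Function.Surjective (mixedDeriv c x y) := by
  let e : StrongDual ℝ (EuclideanSpace ℝ (Fin n)) ≃L[ℝ] EuclideanSpace ℝ (Fin n) :=
    (InnerProductSpace.toDual ℝ _).symm.toContinuousLinearEquiv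
  have hcomp : fderiv ℝ (fun y' => Dx c x y') y =
      (e : _ →L[ℝ] EuclideanSpace ℝ (Fin n)) ∘L mixedDeriv c x y :=
    e.comp_fderiv (f := costDeriv c x)
  rw [hcomp, ContinuousLinearMap.coe_comp] at h
  exact h.of_comp_left e.injective

theorem loeperMaximumPrinciple_of_Dx
    (h : ∀ x₀ ∈ Ω, ∀ x ∈ Ω, ∀ y₀ ∈ Ωb, ∀ y₁ ∈ Ωb, ∀ t ∈ Icc (0 : ℝ) 1, ∀ yt ∈ Ωb,
      -Dx c x₀ yt = (1 - t) • (-Dx c x₀ y₀) + t • (-Dx c x₀ y₁) →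
        -c x yt + c x₀ yt ≤ max (-c x y₀ + c x₀ y₀) (-c x y₁ + c x₀ y₁)) :
    LoeperMaximumPrinciple Ω Ωb c := by
  intro x₀ hx₀ x hx y₀ hy₀ y₁ hy₁ y hy hseg
  rw [segment_eq_image] at hseg
  obtain ⟨t, ht, hyt⟩ := hseg
  simp only [← neg_add_eq_sub]
  refine h x₀ hx₀ x hx y₀ hy₀ y₁ hy₁ t ht y hy ?_
  simp only [Dx_eq_toDual_symm, ← hyt, map_add, map_smulₛₗ, conj_trivial]
  module

end EuclideanSpace

/-- Corollary 2.2 of the paper (local-to-global, for domains in `ℝⁿ`): under (A0)–(A2),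
`c`-convexity of `Ω` with respect to `Ω̄` and Loeper's maximum principle, if the function
`x ↦ u(x) + c(x,x̄₀) − λ₀` has a local minimum (within `Ω`) at `x₀ ∈ Ω`, then
`x̄₀ ∈ ∂_c u(x₀)`. -/
theorem local_min_to_global_csupport
    (n : ℕ) (Ω Ωb : Set (EuclideanSpace ℝ (Fin n)))
    (hΩo : IsOpen Ω) (hΩbd : Bornology.IsBounded Ω)
    (hΩbo : IsOpen Ωb) (hΩbbd : Bornology.IsBounded Ωb)
    (c : EuclideanSpace ℝ (Fin n) → EuclideanSpace ℝ (Fin n) → ℝ)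
    -- (A0): `c` is C⁴ on a neighborhood of the closure of `Ω × Ω̄`
    (hA0 : ∃ U : Set (EuclideanSpace ℝ (Fin n) × EuclideanSpace ℝ (Fin n)),
      IsOpen U ∧ closure (Ω ×ˢ Ωb) ⊆ U ∧
        ContDiffOn ℝ 4 (fun q : EuclideanSpace ℝ (Fin n) × EuclideanSpace ℝ (Fin n) =>
          c q.1 q.2) U)
    -- (A1), twist
    (hA1x : ∀ x ∈ Ω, Set.InjOn (fun y => -Dx c x y) Ωb)
    (hA1y : ∀ y ∈ Ωb, Set.InjOn (fun x => -Dy c x y) Ω)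
    -- (A2), nondegeneracy
    (hA2 : ∀ x ∈ Ω, ∀ y ∈ Ωb,
      Function.Bijective (fderiv ℝ (fun y' => Dx c x y') y))
    -- `Ω` is `c`-convex with respect to `Ω̄`
    (hccΩ : ∀ y ∈ Ωb, Convex ℝ ((fun x => -Dy c x y) '' Ω))
    -- Loeper's maximum principle
    (hLoeper : ∀ x₀ ∈ Ω, ∀ x ∈ Ω, ∀ y₀ ∈ Ωb, ∀ y₁ ∈ Ωb, ∀ t ∈ Set.Icc (0:ℝ) 1,
      ∀ yt ∈ Ωb,
        -Dx c x₀ yt = (1 - t) • (-Dx c x₀ y₀) + t • (-Dx c x₀ y₁) →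
        -c x yt + c x₀ yt ≤ max (-c x y₀ + c x₀ y₀) (-c x y₁ + c x₀ y₁))
    (u : EuclideanSpace ℝ (Fin n) → ℝ)
    -- `u` is `c`-convex
    (hu : ∀ x₀ ∈ Ω, ∃ y₀ ∈ Ωb, ∃ l : ℝ,
      u x₀ = -c x₀ y₀ + l ∧ ∀ x ∈ Ω, -c x y₀ + l ≤ u x) :
    ∀ xb₀ ∈ Ωb, ∀ l₀ : ℝ, ∀ x₀ ∈ Ω,
      IsLocalMinOn (fun x => u x + c x xb₀ - l₀) Ω x₀ →
      xb₀ ∈ csub Ω Ωb c u x₀ := by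
  intro xb₀ hxb₀ l₀ x₀ hx₀ hmin
  obtain ⟨U, hUo, hU, hcU⟩ := hA0
  have hc : ∀ x ∈ Ω, ∀ y ∈ Ωb, ContDiffAt ℝ 2 (Function.uncurry c) (x, y) := fun x hx y hy =>
    (hcU.contDiffAt (hUo.mem_nhds (hU (subset_closure ⟨hx, hy⟩)))).of_le (by norm_num)
  have hcunif : UniformContinuousOn (Function.uncurry c) (Ω ×ˢ Ωb) :=
    ((hΩbd.prod hΩbbd).isCompact_closure.uniformContinuousOn_of_continuous
      (hcU.continuousOn.mono hU)).mono subset_closure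
  have hsurj : ∀ x ∈ Ω, ∀ y ∈ Ωb, Function.Surjective (mixedDeriv c x y) := fun x hx y hy =>
    surjective_mixedDeriv_of_fderiv_Dx (hA2 x hx y hy).surjective
  have huc : IsCConvexOn Ω Ωb c u := isCConvexOn_iff_exists_support.2 hu
  have hmin' : IsLocalMinOn (fun x => u x + c x xb₀) Ω x₀ := by
    simpa [IsLocalMinOn, IsMinFilter] using hmin
  exact mem_csub_iff_isMinOn.2 ⟨hxb₀, local_min_to_global_csupport_general hΩo hΩbo hc
    (twistOn_of_injOn_neg_Dx hA1x) (twistOn_of_injOn_neg_Dx hA1y) hsurj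
    (fun x hx y hy => surjective_mixedDeriv_flip rfl (hc x hx y hy) (hsurj x hx y hy))
    (loeperMaximumPrinciple_of_Dx hLoeper) huc (huc.upperSemicontinuousOn hcunif)
    hxb₀ hx₀ hmin'⟩
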